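/- (Expected weight-enumerator bound for a random maximal-entanglement code.) Let n ≥ 1 and 0 ≤ k ≤ n, and let 𝒱 be the set of all F₂-subspaces S ⊆ V_n with dim S = 2(n−k) and S ∩ S^⊥ = {0}. Then for every real number γ ≥ 0, (1/|𝒱|) · Σ_{S ∈ 𝒱} Σ_{e ∈ S^⊥, e ≠ 0} γ^{wt(e)} = ((2^{2k}−1)/(2^{2n}−1)) · ((1+3γ)^n − 1). In particular, for the depolarizing channel with parameter p ∈ [0,1] and Bhattacharyya parameter γ = 2√(p(1−p)/3) + 2p/3, the average over S ∈ 𝒱 of the MAP block error probability of the code S is at most ((2^{2k}−1)/(2^{2n}−1))·((1+3γ)^n − 1). -/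

import Mathlib

open Finset

/-- The binary symplectic space modelling `n`-qubit Pauli operators modulo phases. -/
abbrev V (n : ℕ) := (Fin n → ZMod 2) × (Fin n → ZMod 2)

/-- The Pauli weight of `v = (x, z)`: the number of indices where `(x i, z i) ≠ (0,0)`. -/
def wt {n : ℕ} (v : V n) : ℕ :=
  (Finset.univ.filter fun i => ¬(v.1 i = 0 ∧ v.2 i = 0)).card

/-- The binary symplectic product. -/
def sympl {n : ℕ} (u v : V n) : ZMod 2 :=
  ∑ i, (u.1 i * v.2 i + u.2 i * v.1 i)

lemma sympl_add_left {n : ℕ} (a b w : V n) :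
    sympl (a + b) w = sympl a w + sympl b w := by
  simp only [sympl, Prod.fst_add, Prod.snd_add, Pi.add_apply, ← Finset.sum_add_distrib]
  exact Finset.sum_congr rfl fun i _ => by ring

lemma sympl_smul_left {n : ℕ} (c : ZMod 2) (a w : V n) :
    sympl (c • a) w = c * sympl a w := by
  simp only [sympl, Prod.smul_fst, Prod.smul_snd, Pi.smul_apply, smul_eq_mul,
    Finset.mul_sum]
  exact Finset.sum_congr rfl fun i _ => by ring

/-- The symplectic dual `W^⊥` of a subspace `W ⊆ V n`. -/
def sdual {n : ℕ} (W : Submodule (ZMod 2) (V n)) : Submodule (ZMod 2) (V n) where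
  carrier := {u | ∀ w ∈ W, sympl u w = 0}
  add_mem' := fun ha hb w hw => by
    rw [sympl_add_left, ha w hw, hb w hw, add_zero]
  zero_mem' := fun w hw => by simp [sympl]
  smul_mem' := fun c a ha w hw => by rw [sympl_smul_left, ha w hw, mul_zero]

open scoped Classical

/-- The depolarizing error distribution with parameter `p` on `V n`. -/
noncomputable def depolP (n : ℕ) (p : ℝ) (v : V n) : ℝ :=
  (1 - p) ^ (n - wt v) * (p / 3) ^ (wt v)

lemma sum_V_prod {n : ℕ} (f : Fin n → ZMod 2 × ZMod 2 → ℝ) :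
    ∑ v : V n, ∏ i, f i (v.1 i, v.2 i) = ∏ i, ∑ a, f i a := by
  rw [Finset.prod_univ_sum, Fintype.piFinset_univ]
  refine (Fintype.sum_equiv (Equiv.arrowProdEquivProdArrow (Fin n) (fun _ => ZMod 2)
    (fun _ => ZMod 2)) _ _ ?_).symm
  intro x
  rfl

lemma sum_pair (g : ZMod 2 × ZMod 2 → ℝ) :
    ∑ a, g a = g (0,0) + g (0,1) + g (1,0) + g (1,1) := by
  rw [Fintype.sum_prod_type]
  have h : (Finset.univ : Finset (ZMod 2)) = {0, 1} := rfl
  simp only [h]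
  rw [Finset.sum_pair (by decide), Finset.sum_pair (by decide), Finset.sum_pair (by decide)]
  ring

lemma prod_ite_wt {n : ℕ} (v : V n) (a b : ℝ) :
    ∏ i, (if (v.1 i, v.2 i) = (0, 0) then a else b) = a ^ (n - wt v) * b ^ wt v := by
  rw [Finset.prod_ite, Finset.prod_const, Finset.prod_const]
  have h2 : wt v = (Finset.univ.filter fun i => ¬ ((v.1 i, v.2 i) = ((0 : ZMod 2), (0 : ZMod 2)))).card := by
    unfold wt
    congr 1
    ext i
    simp
  have h := Finset.card_filter_add_card_filter_not (s := (Finset.univ : Finset (Fin n)))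
    (fun i => (v.1 i, v.2 i) = ((0 : ZMod 2), (0 : ZMod 2)))
  rw [← h2] at h ⊢
  simp only [Finset.card_univ, Fintype.card_fin] at h
  congr 2
  omega

lemma sum_pow_wt (n : ℕ) (γ : ℝ) : ∑ v : V n, γ ^ wt v = (1 + 3 * γ) ^ n := by
  have h : ∀ v : V n, γ ^ wt v
      = ∏ i, (fun (_ : Fin n) (a : ZMod 2 × ZMod 2) => if a = (0, 0) then (1:ℝ) else γ) i (v.1 i, v.2 i) := by
    intro v
    simp only
    rw [prod_ite_wt]; simp
  rw [Finset.sum_congr rfl (fun v _ => h v)]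
  refine (sum_V_prod (fun (_ : Fin n) (a : ZMod 2 × ZMod 2) => if a = (0, 0) then (1:ℝ) else γ)).trans ?_
  simp only [sum_pair]
  simp
  ring

lemma sympl_comm' {n : ℕ} (u v : V n) : sympl u v = sympl v u := by
  unfold sympl
  exact Finset.sum_congr rfl fun i _ => by ring

lemma sympl_self' {n : ℕ} (u : V n) : sympl u u = 0 := by
  unfold sympl
  refine Finset.sum_eq_zero fun i _ => ?_
  rw [mul_comm (u.2 i)]
  exact CharTwo.add_self_eq_zero _

lemma zmod2_cases (a : ZMod 2) : a = 0 ∨ a = 1 := by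
  revert a; decide

lemma exists_sympl {n : ℕ} (u : V n) (hu : u ≠ 0) : ∃ w, sympl u w = 1 := by
  by_contra hcon
  have hz : ∀ w, sympl u w = 0 := fun w =>
    (zmod2_cases _).resolve_right fun h => hcon ⟨w, h⟩
  apply hu
  ext i
  · have := hz (0, Pi.single i 1)
    simpa [sympl, Pi.single_apply] using this
  · have := hz (Pi.single i 1, 0)
    simpa [sympl, Pi.single_apply] using this

lemma exists_sympl_both {n : ℕ} (u v : V n) (hu : u ≠ 0) (hv : v ≠ 0) :
    ∃ w, sympl u w = 1 ∧ sympl w v = 1 := by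
  obtain ⟨a, ha⟩ := exists_sympl u hu
  obtain ⟨b, hb⟩ := exists_sympl v hv
  rw [sympl_comm'] at hb
  rcases zmod2_cases (sympl a v) with h1 | h1
  · rcases zmod2_cases (sympl u b) with h2 | h2
    · refine ⟨a + b, ?_, ?_⟩
      · rw [sympl_comm', sympl_add_left, sympl_comm' a, sympl_comm' b, ha, h2, add_zero]
      · rw [sympl_add_left, h1, hb, zero_add]
    · exact ⟨b, h2, hb⟩
  · exact ⟨a, ha, h1⟩

/-- The symplectic bilinear form. -/
def symB (n : ℕ) : LinearMap.BilinForm (ZMod 2) (V n) :=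
  LinearMap.mk₂ (ZMod 2) sympl sympl_add_left sympl_smul_left
    (fun a b c => by
      rw [sympl_comm', sympl_add_left, sympl_comm' b, sympl_comm' c])
    (fun c a b => by
      rw [sympl_comm', sympl_smul_left, sympl_comm' b, smul_eq_mul])

lemma finrank_V (n : ℕ) : Module.finrank (ZMod 2) (V n) = 2 * n := by
  simp [V]; ring

lemma finrank_sdual {n : ℕ} (S : Submodule (ZMod 2) (V n)) :
    Module.finrank (ZMod 2) (sdual S) = 2 * n - Module.finrank (ZMod 2) S := by
  have hrefl : (symB n).IsRefl := by
    intro x y h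
    change sympl y x = 0
    rw [sympl_comm']; exact h
  have hnd : (symB n).Nondegenerate := by
    refine hrefl.nondegenerate_iff_separatingLeft.2 ?_
    intro x hx
    by_contra hne
    obtain ⟨w, hw⟩ := exists_sympl x hne
    have : sympl x w = 0 := hx w
    rw [hw] at this
    exact one_ne_zero this
  have he : sdual S = (symB n).orthogonal S := by
    ext x
    constructor
    · intro h w hw
      change sympl w x = 0
      rw [sympl_comm']; exact h w hw
    · intro h w hw
      rw [sympl_comm']; exact h w hw
  rw [he, LinearMap.BilinForm.finrank_orthogonal hnd, finrank_V]

/-- Symplectic transvection. -/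
def transv {n : ℕ} (a : V n) : V n →ₗ[ZMod 2] V n where
  toFun x := x + sympl x a • a
  map_add' x y := by
    rw [sympl_add_left, add_smul]; abel
  map_smul' c x := by
    rw [sympl_smul_left, smul_add, mul_smul]; rfl

lemma transv_apply {n : ℕ} (a x : V n) : transv a x = x + sympl x a • a := rfl

lemma transv_transv {n : ℕ} (a x : V n) : transv a (transv a x) = x := by
  simp only [transv_apply, sympl_add_left, sympl_smul_left, sympl_self', mul_zero, add_zero]
  rw [add_assoc, ← add_smul, CharTwo.add_self_eq_zero, zero_smul, add_zero]

lemma sympl_transv {n : ℕ} (a x y : V n) : sympl (transv a x) (transv a y) = sympl x y := by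
  have h : ∀ z b c : V n, sympl z (b + c) = sympl z b + sympl z c := fun z b c => by
    rw [sympl_comm', sympl_add_left, sympl_comm' b, sympl_comm' c]
  have h' : ∀ (z b : V n) (c : ZMod 2), sympl z (c • b) = c * sympl z b := fun z b c => by
    rw [sympl_comm', sympl_smul_left, sympl_comm' b]
  simp only [transv_apply, sympl_add_left, sympl_smul_left, h, h', sympl_self', mul_zero, add_zero]
  rw [sympl_comm' a y, mul_comm (sympl y a), add_assoc, CharTwo.add_self_eq_zero, add_zero]

/-- Transvection as a linear equivalence. -/
def transvE {n : ℕ} (a : V n) : V n ≃ₗ[ZMod 2] V n :=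
  LinearEquiv.ofLinearMap (transv a) (transv a) (by ext1 <;> ext <;> simp [transv_transv])
    (by ext1 <;> ext <;> simp [transv_transv])

/-- Image of a subspace under a transvection. -/
def tmap {n : ℕ} (a : V n) (S : Submodule (ZMod 2) (V n)) : Submodule (ZMod 2) (V n) :=
  S.map (transvE a).toLinearMap

lemma mem_tmap {n : ℕ} (a x : V n) (S : Submodule (ZMod 2) (V n)) :
    x ∈ tmap a S ↔ transv a x ∈ S := by
  constructor
  · rintro ⟨y, hy, rfl⟩
    change transv a (transv a y) ∈ S
    rw [transv_transv]; exact hy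
  · intro h
    exact ⟨transv a x, h, transv_transv a x⟩

lemma tmap_tmap {n : ℕ} (a : V n) (S : Submodule (ZMod 2) (V n)) : tmap a (tmap a S) = S := by
  ext x
  rw [mem_tmap, mem_tmap, transv_transv]

lemma sdual_tmap {n : ℕ} (a : V n) (S : Submodule (ZMod 2) (V n)) :
    sdual (tmap a S) = tmap a (sdual S) := by
  ext x
  rw [mem_tmap]
  constructor
  · intro h w hw
    have := h (transv a w) (by rw [mem_tmap, transv_transv]; exact hw)
    rw [← sympl_transv a, transv_transv] at this
    exact this
  · intro h w hw
    rw [← sympl_transv a]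
    exact h _ ((mem_tmap _ _ _).1 hw)

lemma finrank_tmap {n : ℕ} (a : V n) (S : Submodule (ZMod 2) (V n)) :
    Module.finrank (ZMod 2) (tmap a S) = Module.finrank (ZMod 2) S :=
  LinearEquiv.finrank_map_eq _ _

lemma tmap_mem {n k : ℕ} (𝒱 : Finset (Submodule (ZMod 2) (V n)))
    (h𝒱 : ∀ S : Submodule (ZMod 2) (V n),
      S ∈ 𝒱 ↔ (Module.finrank (ZMod 2) S = 2 * (n - k) ∧ S ⊓ sdual S = ⊥))
    (a : V n) (S : Submodule (ZMod 2) (V n)) (hS : S ∈ 𝒱) : tmap a S ∈ 𝒱 := by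
  rw [h𝒱] at hS ⊢
  refine ⟨by rw [finrank_tmap]; exact hS.1, ?_⟩
  rw [sdual_tmap, eq_bot_iff]
  rintro x ⟨h1, h2⟩
  have h : transv a x ∈ S ⊓ sdual S := ⟨(mem_tmap _ _ _).1 h1, (mem_tmap _ _ _).1 h2⟩
  rw [hS.2, Submodule.mem_bot] at h
  rw [Submodule.mem_bot, ← transv_transv a x, h, map_zero]

lemma count_le {n k : ℕ} (𝒱 : Finset (Submodule (ZMod 2) (V n)))
    (h𝒱 : ∀ S : Submodule (ZMod 2) (V n),
      S ∈ 𝒱 ↔ (Module.finrank (ZMod 2) S = 2 * (n - k) ∧ S ⊓ sdual S = ⊥))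
    (u v : V n) (h : sympl u v = 1) :
    (𝒱.filter fun S => u ∈ sdual S).card ≤ (𝒱.filter fun S => v ∈ sdual S).card := by
  refine Finset.card_le_card_of_injOn (tmap (u + v)) ?_ ?_
  · intro S hS
    simp only [Finset.coe_filter, Set.mem_ofPred_eq] at hS ⊢
    refine ⟨tmap_mem 𝒱 h𝒱 _ _ hS.1, ?_⟩
    rw [sdual_tmap, mem_tmap]
    have : transv (u + v) v = u := by
      rw [transv_apply, sympl_comm', sympl_add_left, sympl_self', h, add_zero, one_smul,
        add_comm u v, ← add_assoc]
      have : v + v = 0 := by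
        ext i
        · exact CharTwo.add_self_eq_zero _
        · exact CharTwo.add_self_eq_zero _
      rw [this, zero_add]
    rw [this]; exact hS.2
  · intro S _ S' _ h
    have := congrArg (tmap (u + v)) h
    simpa only [tmap_tmap] using this

lemma count_eq {n k : ℕ} (𝒱 : Finset (Submodule (ZMod 2) (V n)))
    (h𝒱 : ∀ S : Submodule (ZMod 2) (V n),
      S ∈ 𝒱 ↔ (Module.finrank (ZMod 2) S = 2 * (n - k) ∧ S ⊓ sdual S = ⊥))
    (u v : V n) (hu : u ≠ 0) (hv : v ≠ 0) :
    (𝒱.filter fun S => u ∈ sdual S).card = (𝒱.filter fun S => v ∈ sdual S).card := by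
  have key : ∀ u v : V n, u ≠ 0 → v ≠ 0 →
      (𝒱.filter fun S => u ∈ sdual S).card ≤ (𝒱.filter fun S => v ∈ sdual S).card := by
    intro u v hu hv
    obtain ⟨w, h1, h2⟩ := exists_sympl_both u v hu hv
    exact (count_le 𝒱 h𝒱 u w h1).trans (count_le 𝒱 h𝒱 w v h2)
  exact le_antisymm (key u v hu hv) (key v u hv hu)

lemma swap_sum {n : ℕ} (𝒱 : Finset (Submodule (ZMod 2) (V n))) (γ : ℝ) :
    ∑ S ∈ 𝒱, ∑ e ∈ Finset.univ.filter (fun e => e ∈ sdual S ∧ e ≠ 0), γ ^ (wt e) =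
      ∑ e ∈ Finset.univ.filter (fun e : V n => e ≠ 0),
        ((𝒱.filter fun S => e ∈ sdual S).card : ℝ) * γ ^ wt e := by
  have h1 : ∀ S ∈ 𝒱, ∑ e ∈ Finset.univ.filter (fun e => e ∈ sdual S ∧ e ≠ 0), γ ^ (wt e) =
      ∑ e ∈ Finset.univ.filter (fun e : V n => e ≠ 0), if e ∈ sdual S then γ ^ (wt e) else 0 := by
    intro S _
    rw [← Finset.sum_filter, Finset.filter_filter]
    refine Finset.sum_congr ?_ fun _ _ => rfl
    ext e
    simp [and_comm]
  rw [Finset.sum_congr rfl h1, Finset.sum_comm]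
  refine Finset.sum_congr rfl fun e _ => ?_
  rw [← Finset.sum_filter, Finset.sum_const, nsmul_eq_mul]

lemma sum_ne_zero {n : ℕ} (γ : ℝ) :
    ∑ e ∈ Finset.univ.filter (fun e : V n => e ≠ 0), γ ^ wt e = (1 + 3 * γ) ^ n - 1 := by
  have h := Finset.sum_filter_add_sum_filter_not (Finset.univ : Finset (V n))
    (fun e => e ≠ 0) (fun e => γ ^ wt e)
  rw [sum_pow_wt] at h
  have h0 : (Finset.univ.filter (fun e : V n => ¬ (e ≠ 0))) = {0} := by
    ext e; simp
  rw [h0, Finset.sum_singleton] at h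
  have : wt (0 : V n) = 0 := by simp [wt]
  rw [this, pow_zero] at h
  linarith

lemma sum_one_dual {n k : ℕ} (hk : k ≤ n) (S : Submodule (ZMod 2) (V n))
    (hS : Module.finrank (ZMod 2) S = 2 * (n - k)) :
    ∑ e ∈ Finset.univ.filter (fun e => e ∈ sdual S ∧ e ≠ 0), (1:ℝ) ^ (wt e)
      = 2 ^ (2 * k) - 1 := by
  have hf : Module.finrank (ZMod 2) (sdual S) = 2 * k := by
    rw [finrank_sdual, hS]; omega
  have hc : Fintype.card (sdual S) = 2 ^ (2 * k) := by
    rw [Module.card_eq_pow_finrank (K := ZMod 2), hf, ZMod.card]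
  have hc2 : (Finset.univ.filter (fun e => e ∈ sdual S)).card = 2 ^ (2 * k) := by
    rw [← hc, Fintype.card_subtype]
  have he : Finset.univ.filter (fun e => e ∈ sdual S ∧ e ≠ 0) =
      (Finset.univ.filter (fun e => e ∈ sdual S)).erase 0 := by
    ext e; simp [and_comm]
  rw [he]
  simp only [one_pow, Finset.sum_const, nsmul_eq_mul, mul_one]
  rw [Finset.card_erase_of_mem (by simp), hc2, Nat.cast_sub Nat.one_le_two_pow]
  simp

lemma part_one (n k : ℕ) (hn : 1 ≤ n) (hk : k ≤ n)
    (𝒱 : Finset (Submodule (ZMod 2) (V n)))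
    (h𝒱 : ∀ S : Submodule (ZMod 2) (V n),
      S ∈ 𝒱 ↔ (Module.finrank (ZMod 2) S = 2 * (n - k) ∧ S ⊓ sdual S = ⊥))
    (hne : 𝒱.Nonempty) (γ : ℝ) :
      (1 / (𝒱.card : ℝ)) * ∑ S ∈ 𝒱,
          ∑ e ∈ Finset.univ.filter (fun e => e ∈ sdual S ∧ e ≠ 0), γ ^ (wt e) =
        ((2 ^ (2 * k) - 1) / (2 ^ (2 * n) - 1)) * ((1 + 3 * γ) ^ n - 1) := by
  have hex : ∃ e0 : V n, e0 ≠ 0 := by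
    refine ⟨(fun _ => 1, 0), fun h => ?_⟩
    have := congrFun (congrArg Prod.fst h) ⟨0, hn⟩
    simp at this
  obtain ⟨e0, he0⟩ := hex
  have hgen : ∀ γ : ℝ, ∑ S ∈ 𝒱,
      ∑ e ∈ Finset.univ.filter (fun e => e ∈ sdual S ∧ e ≠ 0), γ ^ (wt e) =
      ((𝒱.filter fun S => e0 ∈ sdual S).card : ℝ) * ((1 + 3 * γ) ^ n - 1) := by
    intro γ
    rw [swap_sum, ← sum_ne_zero, Finset.mul_sum]
    refine Finset.sum_congr rfl fun e he => ?_
    rw [count_eq 𝒱 h𝒱 e e0 (by simpa using he) he0]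
  have h1 := hgen 1
  rw [Finset.sum_congr rfl (fun S hS => sum_one_dual hk S ((h𝒱 S).1 hS).1), Finset.sum_const,
    nsmul_eq_mul] at h1
  have h4 : (1 + 3 * (1:ℝ)) ^ n = 2 ^ (2 * n) := by rw [pow_mul]; norm_num
  rw [h4] at h1
  rw [hgen γ]
  have hc : (𝒱.card : ℝ) ≠ 0 := by
    exact_mod_cast (Finset.card_pos.2 hne).ne'
  have hp : (2:ℝ) ^ (2 * n) - 1 ≠ 0 := by
    have : (1:ℝ) < 2 ^ (2 * n) := one_lt_pow₀ (by norm_num) (by omega)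
    linarith
  field_simp
  linear_combination (-((1 + 3 * γ) ^ n - 1)) * h1

lemma depolP_prod (n : ℕ) (p : ℝ) (v : V n) :
    depolP n p v = ∏ i, (if (v.1 i, v.2 i) = (0, 0) then (1 - p) else p / 3) := by
  rw [prod_ite_wt]; rfl

lemma sum_bhatt (n : ℕ) (p : ℝ) (h0 : 0 ≤ p) (h1 : p ≤ 1) (e : V n) :
    ∑ E : V n, √(depolP n p E * depolP n p (E + e)) =
      (2 * Real.sqrt (p * (1 - p) / 3) + 2 * p / 3) ^ wt e := by
  set γ := 2 * Real.sqrt (p * (1 - p) / 3) + 2 * p / 3 with hγ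
  have h : ∀ E : V n, √(depolP n p E * depolP n p (E + e)) =
      ∏ i, (fun (i : Fin n) (a : ZMod 2 × ZMod 2) =>
        √((if a = (0, 0) then (1 - p) else p / 3) *
          (if a + (e.1 i, e.2 i) = (0, 0) then (1 - p) else p / 3))) i (E.1 i, E.2 i) := by
    intro E
    rw [depolP_prod, depolP_prod, ← Finset.prod_mul_distrib, Real.sqrt_prod]
    · rfl
    · intro i _
      have : 0 ≤ 1 - p := by linarith
      have : 0 ≤ p / 3 := by linarith
      apply mul_nonneg <;> split_ifs <;> assumption
  rw [Finset.sum_congr rfl (fun v _ => h v)]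
  refine (sum_V_prod (fun (i : Fin n) (a : ZMod 2 × ZMod 2) =>
        √((if a = (0, 0) then (1 - p) else p / 3) *
          (if a + (e.1 i, e.2 i) = (0, 0) then (1 - p) else p / 3)))).trans ?_
  have h2 : γ ^ wt e = ∏ i, (if (e.1 i, e.2 i) = (0, 0) then (1:ℝ) else γ) := by
    rw [prod_ite_wt]; simp
  rw [h2]
  refine Finset.prod_congr rfl fun i _ => ?_
  have ha : √((1 - p) * (1 - p)) = 1 - p := Real.sqrt_mul_self (by linarith)
  have hb : √((p / 3) * (p / 3)) = p / 3 := Real.sqrt_mul_self (by linarith)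
  have hc : √((1 - p) * (p / 3)) = √(p * (1 - p) / 3) := by congr 1; ring
  have hd : √((p / 3) * (1 - p)) = √(p * (1 - p) / 3) := by congr 1; ring
  have h11 : (1 + 1 : ZMod 2) = 0 := by decide
  rw [sum_pair]
  rcases zmod2_cases (e.1 i) with hx | hx <;> rcases zmod2_cases (e.2 i) with hz | hz <;>
    rw [hx, hz] <;> simp [h11, ha, hb, hc, hd, hγ, -Real.sqrt_mul_self_eq_abs] <;> ring

lemma depolP_nonneg (n : ℕ) (p : ℝ) (h0 : 0 ≤ p) (h1 : p ≤ 1) (v : V n) : 0 ≤ depolP n p v :=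
  mul_nonneg (pow_nonneg (by linarith) _) (pow_nonneg (by linarith) _)

lemma map_bound (n : ℕ) (p : ℝ) (h0 : 0 ≤ p) (h1 : p ≤ 1) (S : Submodule (ZMod 2) (V n))
    (lp sp lh : V n → V n)
    (hp : ∀ E : V n, lp E ∈ sdual S ∧ sp E ∈ S ∧ E = lp E + sp E)
    (hh : ∀ s' ∈ S, lh s' ∈ sdual S ∧
            ∀ l' ∈ sdual S, depolP n p (l' + s') ≤ depolP n p (lh s' + s')) :
    ∑ E ∈ Finset.univ.filter (fun E => lh (sp E) ≠ lp E), depolP n p E ≤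
      ∑ e ∈ Finset.univ.filter (fun e => e ∈ sdual S ∧ e ≠ 0),
        (2 * Real.sqrt (p * (1 - p) / 3) + 2 * p / 3) ^ (wt e) := by
  rw [Finset.sum_congr rfl (fun e _ => (sum_bhatt n p h0 h1 e).symm), Finset.sum_comm]
  have hnn : ∀ E : V n, 0 ≤ ∑ e ∈ Finset.univ.filter (fun e => e ∈ sdual S ∧ e ≠ 0),
      √(depolP n p E * depolP n p (E + e)) := fun E =>
    Finset.sum_nonneg fun _ _ => Real.sqrt_nonneg _
  refine le_trans (Finset.sum_le_sum ?_)
    (Finset.sum_le_sum_of_subset_of_nonneg (Finset.filter_subset _ _) fun E _ _ => hnn E)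
  intro E hE
  have hE' : lh (sp E) ≠ lp E := by simpa using hE
  obtain ⟨hl, hs, hEq⟩ := hp E
  obtain ⟨hm, hmax⟩ := hh _ hs
  have hle := hmax _ hl
  rw [← hEq] at hle
  have hsum : E + (lh (sp E) - lp E) = lh (sp E) + sp E := by
    nth_rewrite 1 [hEq]; abel
  have hmem : lh (sp E) - lp E ∈ Finset.univ.filter (fun e => e ∈ sdual S ∧ e ≠ 0) := by
    simp only [Finset.mem_filter, Finset.mem_univ, true_and]
    exact ⟨Submodule.sub_mem _ hm hl, sub_ne_zero.2 hE'⟩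
  refine le_trans ?_ (Finset.single_le_sum (fun e _ => Real.sqrt_nonneg _) hmem)
  rw [hsum]
  have hP := depolP_nonneg n p h0 h1 E
  exact Real.le_sqrt_of_sq_le (by rw [sq]; exact mul_le_mul_of_nonneg_left hle hP)

/-- Expected weight-enumerator bound for a random maximal-entanglement
`[[n,k;n−k]]` EAQEC code: for every `γ ≥ 0`,
`(1/|𝒱|) ∑_{S ∈ 𝒱} ∑_{0 ≠ e ∈ S^⊥} γ^{wt e} = ((2^{2k}−1)/(2^{2n}−1))((1+3γ)^n − 1)`;
in particular, for the depolarizing channel with parameter `p` and Bhattacharyya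
parameter `γ`, the average MAP block error probability is at most the right-hand
side. -/
theorem expected_weight_enumerator_bound_random_code (n k : ℕ) (hn : 1 ≤ n) (hk : k ≤ n)
    (𝒱 : Finset (Submodule (ZMod 2) (V n)))
    (h𝒱 : ∀ S : Submodule (ZMod 2) (V n),
      S ∈ 𝒱 ↔ (Module.finrank (ZMod 2) S = 2 * (n - k) ∧ S ⊓ sdual S = ⊥))
    (hne : 𝒱.Nonempty) :
    (∀ γ : ℝ, 0 ≤ γ →
      (1 / (𝒱.card : ℝ)) * ∑ S ∈ 𝒱,
          ∑ e ∈ Finset.univ.filter (fun e => e ∈ sdual S ∧ e ≠ 0), γ ^ (wt e) =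
        ((2 ^ (2 * k) - 1) / (2 ^ (2 * n) - 1)) * ((1 + 3 * γ) ^ n - 1)) ∧
    (∀ p : ℝ, 0 ≤ p → p ≤ 1 →
      ∀ ℓpart spart ℓhat : Submodule (ZMod 2) (V n) → V n → V n,
        (∀ S ∈ 𝒱,
          (∀ E : V n, ℓpart S E ∈ sdual S ∧ spart S E ∈ S ∧ E = ℓpart S E + spart S E) ∧
          (∀ s' ∈ S, ℓhat S s' ∈ sdual S ∧
            ∀ ℓ' ∈ sdual S, depolP n p (ℓ' + s') ≤ depolP n p (ℓhat S s' + s'))) →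
        (1 / (𝒱.card : ℝ)) * ∑ S ∈ 𝒱,
            ∑ E ∈ Finset.univ.filter (fun E => ℓhat S (spart S E) ≠ ℓpart S E),
              depolP n p E ≤
          ((2 ^ (2 * k) - 1) / (2 ^ (2 * n) - 1)) *
            ((1 + 3 * (2 * Real.sqrt (p * (1 - p) / 3) + 2 * p / 3)) ^ n - 1)) := by
  refine ⟨fun γ _ => part_one n k hn hk 𝒱 h𝒱 hne γ, ?_⟩
  intro p h0 h1 ℓpart spart ℓhat h
  rw [← part_one n k hn hk 𝒱 h𝒱 hne]
  refine mul_le_mul_of_nonneg_left (Finset.sum_le_sum fun S hS => ?_) (by positivity)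
  exact map_bound n p h0 h1 S (ℓpart S) (spart S) (ℓhat S) (h S hS).1 (h S hS).2
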